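/- Let q ≥ 1 and n ≥ 2q+4, and let D_{n,q} be the symmetric n×n 0–1 matrix with d(i,j) = 1 if q+2 ≤ |i−j| ≤ n−q−2 and d(i,j) = 0 otherwise. Then D_{n,q} is a (q+1)-Kalmanson matrix but not a q-Kalmanson matrix; in particular the class of q-Kalmanson matrices is a proper subclass of the class of (q+1)-Kalmanson matrices. -/

import Mathlib

/-- Cyclic shift: the city `p` steps after position `i` in the circular order on `Fin n`. -/
def finShift {n : ℕ} (i : Fin n) (p : ℕ) : Fin n :=
  ⟨(i.val + p) % n, Nat.mod_lt _ i.pos⟩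

/-- The `q`-stripe TSP objective: `∑_{p=1}^{q} ∑_{i=1}^{n} d(π(i), π(i+p))`,
indices taken cyclically modulo `n`. -/
noncomputable def stripeObj (q : ℕ) {n : ℕ} (D : Fin n → Fin n → ℝ)
    (π : Equiv.Perm (Fin n)) : ℝ :=
  ∑ p ∈ Finset.Icc 1 q, ∑ i : Fin n, D (π i) (π (finShift i p))

/-- The fully crossing involution on `2q+2` points: `j ↦ j + (q+1) (mod 2q+2)`. -/
def crossShift (q : ℕ) (j : Fin (2*q+2)) : Fin (2*q+2) :=
  ⟨(j.val + (q+1)) % (2*q+2), Nat.mod_lt _ (by omega)⟩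

/-- A symmetric matrix `D` is `q`-Kalmanson if for every choice of `2q+2` indices
(in increasing order, via a strictly monotone `f`), the fully crossing matching has
maximum weight among all perfect matchings of these `2q+2` indices.  Perfect
matchings are encoded as fixed-point-free involutions `σ`; each matching weight is
counted twice in the sums below (once from each endpoint), which for symmetric `D`
is equivalent to comparing matching weights. -/
def qKalmanson (q : ℕ) {n : ℕ} (D : Fin n → Fin n → ℝ) : Prop :=
  ∀ f : Fin (2*q+2) → Fin n, StrictMono f →
    ∀ σ : Equiv.Perm (Fin (2*q+2)), (∀ j, σ (σ j) = j) → (∀ j, σ j ≠ j) →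
      ∑ j : Fin (2*q+2), D (f j) (f (σ j)) ≤ ∑ j : Fin (2*q+2), D (f j) (f (crossShift q j))


/-- The matrix `D_{n,q}` from Lemma 3.2: `d(i,j) = 1` if `q+2 ≤ |i−j| ≤ n−q−2`
and `d(i,j) = 0` otherwise (cities represented by `Fin n`). -/
noncomputable def Dnq (n q : ℕ) : Fin n → Fin n → ℝ := fun i j =>
  if q+2 ≤ max i.val j.val - min i.val j.val ∧ max i.val j.val - min i.val j.val ≤ n-q-2
  then 1 else 0

/-! Two indices matched by the fully crossing matching on `2q+4` chosen indices have `q+1` chosen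
indices strictly between them and `q+1` outside, so their distance lies in `[q+2, n-q-2]`: every
crossing pair has weight `1`, the largest entry of `D_{n,q}`. On the first `2q+2` indices the
crossing pairs are at distance `q+1` and have weight `0`, whereas a perfect matching containing
`{0, q+2}` has positive weight. -/

section Gaps

variable {m n : ℕ} {f : Fin m → Fin n}

-- Truncated subtraction: both sides are `0` when `b ≤ a`.
theorem val_sub_val_le_of_strictMono (hf : StrictMono f) (a b : Fin m) :
    (b - a : ℕ) ≤ f b - f a := by
  have hmaps : Set.MapsTo f (Finset.Ico a b) (Finset.Ico (f a) (f b)) := by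
    intro i hi
    rw [Finset.coe_Ico] at hi ⊢
    exact ⟨hf.monotone hi.1, hf hi.2⟩
  simpa only [Fin.card_Ico] using Finset.card_le_card_of_injOn f hmaps hf.injective.injOn

theorem val_sub_val_le_add_of_strictMono (hf : StrictMono f) (a b : Fin m) :
    (f b - f a : ℕ) ≤ n - m + (b - a) := by
  have hm : 0 < m := a.pos
  have hbelow := val_sub_val_le_of_strictMono hf ⟨0, hm⟩ a
  have habove := val_sub_val_le_of_strictMono hf b ⟨m - 1, by omega⟩
  have hbetween : b ≤ a → f b ≤ f a := fun h => hf.monotone h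
  rw [Fin.le_def, Fin.le_def] at hbetween
  dsimp only at hbelow habove
  omega

end Gaps

theorem exists_fixedPointFree_involution_apply_eq {α : Type*} {c : α → α}
    (hc : Function.Involutive c) (hne : ∀ x, c x ≠ x) {a b : α} (hab : a ≠ b) :
    ∃ σ : Equiv.Perm α, (∀ x, σ (σ x) = x) ∧ (∀ x, σ x ≠ x) ∧ σ a = b := by
  classical
  -- Conjugating `c` by the transposition of `c a` and `b`, which fixes `a`, redirects `a` to `b`.
  let s := Equiv.swap (c a) b
  have hs : ∀ x, s (s x) = x := Equiv.swap_apply_self _ _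
  have hsa : s a = a := Equiv.swap_apply_of_ne_of_ne (hne a).symm hab
  refine ⟨s * hc.toPerm * s, fun x => ?_, fun x hx => hne (s x) ?_, ?_⟩
  · simp only [Equiv.Perm.mul_apply, Function.Involutive.coe_toPerm, hs, hc (s x)]
  · rw [← hs (c (s x))]
    exact congrArg s hx
  · simp only [Equiv.Perm.mul_apply, Function.Involutive.coe_toPerm, hsa]
    exact Equiv.swap_apply_left _ _

section CrossingMatching

variable {q : ℕ}

theorem crossShift_involutive : Function.Involutive (crossShift q) := by
  intro j
  ext
  change ((j + (q + 1)) % (2 * q + 2) + (q + 1)) % (2 * q + 2) = (j : ℕ)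
  rw [Nat.mod_add_mod, show (j + (q + 1) + (q + 1) : ℕ) = j + (2 * q + 2) by ring,
    Nat.add_mod_right, Nat.mod_eq_of_lt j.isLt]

theorem crossShift_of_val_add_eq {i j : Fin (2 * q + 2)} (hij : (i + (q + 1) : ℕ) = j) :
    crossShift q i = j := by
  ext
  change (i + (q + 1)) % (2 * q + 2) = (j : ℕ)
  rw [hij, Nat.mod_eq_of_lt j.isLt]

theorem rel_crossShift_of_symm {r : Fin (2 * q + 2) → Fin (2 * q + 2) → Prop}
    (hsymm : ∀ i j, r i j → r j i)
    (hr : ∀ i j : Fin (2 * q + 2), (i + (q + 1) : ℕ) = j → r i j)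
    (j : Fin (2 * q + 2)) : r j (crossShift q j) := by
  rcases lt_or_ge (j : ℕ) (q + 1) with hj | hj
  · let k : Fin (2 * q + 2) := ⟨j + (q + 1), by omega⟩
    rw [crossShift_of_val_add_eq (j := k) rfl]
    exact hr j k rfl
  · let k : Fin (2 * q + 2) := ⟨j - (q + 1), by omega⟩
    have hkj : (k + (q + 1) : ℕ) = j := Nat.sub_add_cancel hj
    rw [← crossShift_of_val_add_eq hkj, crossShift_involutive k]
    exact hsymm k _ (crossShift_of_val_add_eq hkj ▸ hr k j hkj)

theorem crossShift_ne_self (j : Fin (2 * q + 2)) : crossShift q j ≠ j :=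
  (rel_crossShift_of_symm (r := (· ≠ ·)) (fun _ _ => Ne.symm) (by omega) j).symm

theorem qKalmanson.exists_crossing_pos {n : ℕ} {D : Fin n → Fin n → ℝ} (hK : qKalmanson q D)
    (hD : ∀ i j, 0 ≤ D i j) {f : Fin (2 * q + 2) → Fin n} (hf : StrictMono f)
    {a b : Fin (2 * q + 2)} (hab : a ≠ b) (hpos : 0 < D (f a) (f b)) :
    ∃ j, 0 < D (f j) (f (crossShift q j)) := by
  obtain ⟨σ, hσ, hσne, hσa⟩ :=
    exists_fixedPointFree_involution_apply_eq crossShift_involutive crossShift_ne_self hab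
  have hweight : 0 < ∑ j, D (f j) (f (σ j)) :=
    Finset.sum_pos' (fun _ _ => hD _ _) ⟨a, Finset.mem_univ a, hσa.symm ▸ hpos⟩
  obtain ⟨j, -, hj⟩ := Finset.exists_lt_of_sum_lt (f := fun _ => (0 : ℝ))
    (by simpa only [Finset.sum_const_zero] using hweight.trans_le (hK f hf σ hσ hσne))
  exact ⟨j, hj⟩

end CrossingMatching

section Dnq

variable {n q : ℕ}

theorem Dnq_comm (i j : Fin n) : Dnq n q i j = Dnq n q j i := by
  simp only [Dnq, max_comm, min_comm]

theorem Dnq_nonneg (i j : Fin n) : 0 ≤ Dnq n q i j :=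
  ite_nonneg zero_le_one le_rfl

theorem Dnq_le_one (i j : Fin n) : Dnq n q i j ≤ 1 :=
  ite_le_one le_rfl zero_le_one

theorem Dnq_of_le {i j : Fin n} (hij : i ≤ j) :
    Dnq n q i j = if q + 2 ≤ (j - i : ℕ) ∧ (j - i : ℕ) ≤ n - q - 2 then 1 else 0 := by
  rw [Dnq, max_eq_right (Fin.le_def.mp hij), min_eq_left (Fin.le_def.mp hij)]

theorem Dnq_crossing_eq_one {f : Fin (2 * (q + 1) + 2) → Fin n} (hf : StrictMono f)
    (j : Fin (2 * (q + 1) + 2)) : Dnq n q (f j) (f (crossShift (q + 1) j)) = 1 := by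
  refine rel_crossShift_of_symm (r := fun i j => Dnq n q (f i) (f j) = 1)
    (fun i j h => (Dnq_comm _ _).trans h) (fun i j hij => ?_) j
  have hcard : 2 * (q + 1) + 2 ≤ n := by
    simpa only [Fintype.card_fin] using Fintype.card_le_of_injective f hf.injective
  have hlower := val_sub_val_le_of_strictMono hf i j
  have hupper := val_sub_val_le_add_of_strictMono hf i j
  rw [Dnq_of_le (hf.monotone (by omega)), if_pos (by omega)]

theorem qKalmanson_succ_Dnq : qKalmanson (q + 1) (Dnq n q) := fun _ hf _ _ _ =>
  Finset.sum_le_sum fun _ _ => (Dnq_le_one _ _).trans_eq (Dnq_crossing_eq_one hf _).symm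

theorem Dnq_castLE_crossing_eq_zero (hn : 2 * q + 2 ≤ n) (j : Fin (2 * q + 2)) :
    Dnq n q (Fin.castLE hn j) (Fin.castLE hn (crossShift q j)) = 0 := by
  refine rel_crossShift_of_symm (r := fun i j => Dnq n q (Fin.castLE hn i) (Fin.castLE hn j) = 0)
    (fun i j h => (Dnq_comm _ _).trans h) (fun i j _ => ?_) j
  rw [Dnq_of_le (Fin.castLE_le_castLE_iff hn |>.mpr (by omega)), if_neg]
  simp only [Fin.val_castLE]
  omega

theorem not_qKalmanson_Dnq (hq : 1 ≤ q) (hn : 2 * q + 4 ≤ n) : ¬ qKalmanson q (Dnq n q) := by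
  intro hK
  have hle : 2 * q + 2 ≤ n := by omega
  let b : Fin (2 * q + 2) := ⟨q + 2, by omega⟩
  have hpos : 0 < Dnq n q (Fin.castLE hle 0) (Fin.castLE hle b) := by
    rw [Dnq_of_le (Fin.le_def.mpr (Nat.zero_le _)), if_pos]
    · exact one_pos
    · simp only [Fin.val_castLE, Fin.val_zero, b]
      omega
  have h0b : 0 ≠ b := Fin.ne_of_val_ne (by simp only [Fin.val_zero, b]; omega)
  obtain ⟨j, hj⟩ := hK.exists_crossing_pos Dnq_nonneg (Fin.strictMono_castLE hle) h0b hpos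
  exact hj.ne' (Dnq_castLE_crossing_eq_zero hle j)

end Dnq

/-- Lemma 3.2 (properness): for `q ≥ 1` and `n ≥ 2q+4`, the matrix `D_{n,q}` is
`(q+1)`-Kalmanson but not `q`-Kalmanson; in particular the `q`-Kalmanson matrices
form a proper subclass of the `(q+1)`-Kalmanson matrices. -/
theorem Dnq_qKalmanson_proper (q n : ℕ) (hq : 1 ≤ q) (hn : 2*q+4 ≤ n) :
    qKalmanson (q+1) (Dnq n q) ∧ ¬ qKalmanson q (Dnq n q) :=
  ⟨qKalmanson_succ_Dnq, not_qKalmanson_Dnq hq hn⟩
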